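/- Let (X,d,𝔪) be a PI space. Let E ⊂ X be an indecomposable set, and let 𝒞𝒞ᵉ(X∖E) = {G_i}_{i∈I}. Then for any index set J ⊂ I, the set E ∪ ⋃_{i∈J} G_i is also indecomposable, and P(E ∪ ⋃_{i∈J} G_i, X) ≤ P(E,X). -/

import Mathlib

open MeasureTheory Metric Filter Set ENNReal NNReal Topology

/-- A curve: a rectifiable continuous map from a compact interval into `X`,
parametrized by arc length (hence `1`-Lipschitz on `[0, len]`). -/
structure Curve (X : Type*) [MetricSpace X] where
  len : ℝ
  len_nonneg : 0 ≤ len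
  toFun : ℝ → X
  lipschitzOn : LipschitzOnWith 1 toFun (Set.Icc 0 len)

namespace Curve

variable {X : Type*} [MetricSpace X]

/-- A curve is nonconstant if it attains two distinct values. -/
def IsNonconstant (γ : Curve X) : Prop :=
  ∃ s ∈ Set.Icc (0:ℝ) γ.len, ∃ t ∈ Set.Icc (0:ℝ) γ.len, γ.toFun s ≠ γ.toFun t

/-- A curve lies in a set `W`. -/
def IsIn (γ : Curve X) (W : Set X) : Prop :=
  ∀ s ∈ Set.Icc (0:ℝ) γ.len, γ.toFun s ∈ W

end Curve

variable {X : Type*} [MetricSpace X] [MeasurableSpace X] [BorelSpace X]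

/-- The curve integral `∫_γ g ds` for an arc-length parametrized curve. -/
noncomputable def curveLintegral (g : X → ℝ≥0∞) (γ : Curve X) : ℝ≥0∞ :=
  ∫⁻ s in Set.Icc (0:ℝ) γ.len, g (γ.toFun s)

/-- The upper gradient inequality `|u(x) - u(y)| ≤ ∫_γ g ds` along a curve `γ`
with endpoints `x, y`. -/
def UpperGradIneq (g : X → ℝ≥0∞) (u : X → ℝ) (γ : Curve X) : Prop :=
  ENNReal.ofReal |u (γ.toFun 0) - u (γ.toFun γ.len)| ≤ curveLintegral g γ

/-- The 1-modulus of a family of curves. -/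
noncomputable def mod1 (μ : Measure X) (Γ : Set (Curve X)) : ℝ≥0∞ :=
  ⨅ (ρ : X → ℝ≥0∞) (_ : Measurable ρ ∧ ∀ γ ∈ Γ, 1 ≤ curveLintegral ρ γ),
    ∫⁻ x, ρ x ∂μ

/-- `g` is a 1-weak upper gradient of `u` in `W`: the upper gradient inequality
holds for all nonconstant curves in `W` outside a family of 1-modulus zero. -/
def IsWeakUpperGradientOn (μ : Measure X) (g : X → ℝ≥0∞) (u : X → ℝ) (W : Set X) : Prop :=
  Measurable g ∧
    mod1 μ {γ : Curve X | γ.IsNonconstant ∧ γ.IsIn W ∧ ¬ UpperGradIneq g u γ} = 0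

/-- `g` is a (strong) upper gradient of `u` in `X`. -/
def IsUpperGradient (g : X → ℝ≥0∞) (u : X → ℝ) : Prop :=
  Measurable g ∧ ∀ γ : Curve X, γ.IsNonconstant → UpperGradIneq g u γ

/-- `∫_W g_u dμ`: the integral over `W` of the minimal 1-weak upper gradient of `u`
in `W`, equivalently the infimum of `∫_W g dμ` over all 1-weak upper gradients `g`
of `u` in `W`. -/
noncomputable def gradEnergy (μ : Measure X) (u : X → ℝ) (W : Set X) : ℝ≥0∞ :=
  ⨅ (g : X → ℝ≥0∞) (_ : IsWeakUpperGradientOn μ g u W), ∫⁻ x in W, g x ∂μ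

/-- `u` is locally Lipschitz on `W`. -/
def LocLipschitzOn (u : X → ℝ) (W : Set X) : Prop :=
  ∀ x ∈ W, ∃ K : ℝ≥0, ∃ t ∈ nhdsWithin x W, LipschitzOnWith K u t

/-- Convergence `uᵢ → v` in `L¹_loc(W)`. -/
def TendstoL1loc (μ : Measure X) (W : Set X) (u : ℕ → X → ℝ) (v : X → ℝ) : Prop :=
  ∀ W' : Set X, IsOpen W' → IsCompact (closure W') → closure W' ⊆ W →
    Tendsto (fun i => ∫⁻ x in W', ENNReal.ofReal |u i x - v x| ∂μ) atTop (𝓝 0)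

/-- The total variation `‖Dv‖(W)` of a function `v` in an open set `W`. -/
noncomputable def variationOn (μ : Measure X) (v : X → ℝ) (W : Set X) : ℝ≥0∞ :=
  ⨅ (u : ℕ → X → ℝ) (_ : (∀ i, LocLipschitzOn (u i) W) ∧ TendstoL1loc μ W u v),
    Filter.liminf (fun i => gradEnergy μ (u i) W) Filter.atTop

/-- The total variation `‖Dv‖(A)` of a function `v` in an arbitrary set `A`. -/
noncomputable def totalVar (μ : Measure X) (v : X → ℝ) (A : Set X) : ℝ≥0∞ :=
  ⨅ (W : Set X) (_ : IsOpen W ∧ A ⊆ W), variationOn μ v W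

/-- The perimeter `P(E, A) = ‖Dχ_E‖(A)`. -/
noncomputable def perimeter (μ : Measure X) (E A : Set X) : ℝ≥0∞ :=
  totalVar μ (Set.indicator E fun _ => (1 : ℝ)) A

/-- The measure `μ` is doubling. -/
def IsDoublingMeasure (μ : Measure X) : Prop :=
  ∃ C : ℝ≥0∞, 1 ≤ C ∧ ∀ (x : X) (r : ℝ), 0 < r → μ (ball x (2 * r)) ≤ C * μ (ball x r)

/-- The space supports a (1,1)-Poincaré inequality:
`⨍_{B(x,r)} |u - u_{B(x,r)}| dμ ≤ C r ⨍_{B(x,λr)} g dμ` for every ball, every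
`u ∈ L¹_loc(X)` and every upper gradient `g` of `u` (stated here multiplied
through by the measures of the two balls). -/
def SupportsPoincare (μ : Measure X) : Prop :=
  ∃ C lam : ℝ, 0 < C ∧ 1 ≤ lam ∧
    ∀ (x : X) (r : ℝ), 0 < r → ∀ (u : X → ℝ) (g : X → ℝ≥0∞),
      (∀ (y : X) (s : ℝ), IntegrableOn u (ball y s) μ) → IsUpperGradient g u →
        μ (ball x (lam * r)) *
            ∫⁻ y in ball x r, ENNReal.ofReal |u y - ⨍ z in ball x r, u z ∂μ| ∂μ ≤
          ENNReal.ofReal (C * r) * μ (ball x r) * ∫⁻ y in ball x (lam * r), g y ∂μ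

/-- `(X, d, μ)` is a PI space: complete, doubling, supporting a (1,1)-Poincaré
inequality. -/
def IsPISpace (μ : Measure X) : Prop :=
  CompleteSpace X ∧ IsDoublingMeasure μ ∧ SupportsPoincare μ

/-- A set `E` of finite perimeter is decomposable in a Borel set `D` if there is a
partition `{F, G}` of `E ∩ D` into sets of finite perimeter in `D`, both of positive
measure, with `P(E,D) = P(F,D) + P(G,D)`. -/
def IsDecomposableIn (μ : Measure X) (E D : Set X) : Prop :=
  ∃ F G : Set X, MeasurableSet F ∧ MeasurableSet G ∧ Disjoint F G ∧ F ∪ G = E ∩ D ∧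
    perimeter μ F D < ⊤ ∧ perimeter μ G D < ⊤ ∧ 0 < μ F ∧ 0 < μ G ∧
    perimeter μ E D = perimeter μ F D + perimeter μ G D

/-- `E` is indecomposable in `D`. -/
def IsIndecomposableIn (μ : Measure X) (E D : Set X) : Prop :=
  ¬ IsDecomposableIn μ E D

/-- `{F i}_{i ∈ I}` is a (finite or countable) partition of `E` into indecomposable
Borel sets of positive measure and finite perimeter whose perimeters sum to `P(E,X)`;
this is the defining property of the essential connected components `𝒞𝒞ᵉ(E)`. -/
def IsEssentialPartition (μ : Measure X) (E : Set X) (I : Set ℕ) (F : ℕ → Set X) : Prop :=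
  (∀ i ∈ I, MeasurableSet (F i)) ∧
  (∀ i ∈ I, ∀ j ∈ I, i ≠ j → Disjoint (F i) (F j)) ∧
  (⋃ i ∈ I, F i) = E ∧
  (∀ i ∈ I, 0 < μ (F i)) ∧
  (∀ i ∈ I, perimeter μ (F i) Set.univ < ⊤) ∧
  (∀ i ∈ I, IsIndecomposableIn μ (F i) Set.univ) ∧
  perimeter μ E Set.univ = ∑' i : I, perimeter μ (F i.1) Set.univ

/-- Given a decomposition `{G i}_{i ∈ I}` of `X ∖ E` into essential connected
components, the saturation of `E`: the union of `E` and its holes, i.e. the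
components of finite measure. -/
def saturationOf (μ : Measure X) (E : Set X) (I : Set ℕ) (G : ℕ → Set X) : Set X :=
  E ∪ ⋃ (i : ℕ) (_ : i ∈ I ∧ μ (G i) < ⊤), G i

/-- The measure-theoretic boundary `∂* E`: points where both `E` and its complement
have strictly positive upper density. -/
def mtBoundary (μ : Measure X) (E : Set X) : Set X :=
  {x : X |
    0 < Filter.limsup (fun r => μ (ball x r ∩ E) / μ (ball x r)) (nhdsWithin 0 (Set.Ioi 0)) ∧
    0 < Filter.limsup (fun r => μ (ball x r \ E) / μ (ball x r)) (nhdsWithin 0 (Set.Ioi 0))}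

/-- The restricted codimension-one Hausdorff content `ℋ_R`. -/
noncomputable def codimOneContent (μ : Measure X) (R : ℝ) (A : Set X) : ℝ≥0∞ :=
  ⨅ (s : Set (X × ℝ))
    (_ : s.Countable ∧ (∀ p ∈ s, 0 < p.2 ∧ p.2 ≤ R) ∧ A ⊆ ⋃ p ∈ s, ball p.1 p.2),
    ∑' p : s, μ (ball (p : X × ℝ).1 (p : X × ℝ).2) / ENNReal.ofReal (p : X × ℝ).2

/-- The codimension-one Hausdorff measure `ℋ(A) = lim_{R → 0} ℋ_R(A)`. -/
noncomputable def codimOneHausdorff (μ : Measure X) (A : Set X) : ℝ≥0∞ :=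
  ⨆ (R : ℝ) (_ : 0 < R), codimOneContent μ R A

section RealLine

theorem abs_deriv_le_of_eventually_abs_sub_le {f F : ℝ → ℝ} {f' F' t : ℝ}
    (hf : HasDerivAt f f' t) (hF : HasDerivAt F F' t)
    (h : ∀ᶠ s in 𝓝 t, |f s - f t| ≤ |F s - F t|) : |f'| ≤ |F'| := by
  have hf₁ := (hasDerivAt_iff_tendsto_slope.1 hf).abs
  have hF₁ := (hasDerivAt_iff_tendsto_slope.1 hF).abs
  refine le_of_tendsto_of_tendsto hf₁ hF₁ ?_
  filter_upwards [nhdsWithin_le_nhds h] with s hs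
  simp only [slope_def_field, abs_div]
  gcongr

theorem ae_ofReal_abs_deriv_le {f : ℝ → ℝ} {G : ℝ → ℝ≥0∞} {L : ℝ} (hL : 0 ≤ L)
    (hG : AEMeasurable G (volume.restrict (Icc 0 L))) (hfin : ∫⁻ s in Icc 0 L, G s ≠ ⊤)
    (h : ∀ s t, 0 ≤ s → s ≤ t → t ≤ L → ENNReal.ofReal |f s - f t| ≤ ∫⁻ x in Icc s t, G x) :
    ∀ᵐ t, t ∈ Ioo 0 L → DifferentiableAt ℝ f t → ENNReal.ofReal |deriv f t| ≤ G t := by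
  have hint : IntegrableOn (fun t => (G t).toReal) (Icc 0 L) :=
    integrable_toReal_of_lintegral_ne_top hG hfin
  have hii : IntervalIntegrable (fun t => (G t).toReal) volume 0 L := by
    rw [intervalIntegrable_iff_integrableOn_Icc_of_le hL]
    exact hint
  have hlt : ∀ᵐ t, t ∈ Icc 0 L → G t < ⊤ := by
    have := ae_lt_top' hG hfin
    rwa [ae_restrict_iff' measurableSet_Icc] at this
  have key : ∀ s t, 0 ≤ s → s ≤ t → t ≤ L → |f s - f t| ≤ ∫ x in s..t, (G x).toReal := by
    intro s t hs hst ht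
    have hsub : Icc s t ⊆ Icc 0 L := Icc_subset_Icc hs ht
    have h₁ := h s t hs hst ht
    have hne : ∫⁻ x in Icc s t, G x ≠ ⊤ :=
      ((lintegral_mono_set hsub).trans_lt hfin.lt_top).ne
    rw [intervalIntegral.integral_of_le hst, ← integral_Icc_eq_integral_Ioc,
      integral_toReal (hG.mono_measure (Measure.restrict_mono hsub le_rfl))]
    · exact (ENNReal.ofReal_le_iff_le_toReal hne).1 h₁
    · rw [ae_restrict_iff' measurableSet_Icc]
      filter_upwards [hlt] with x hx hxs using hx (hsub hxs)
  filter_upwards [hii.ae_hasDerivAt_integral, hlt] with t htF htlt htmem htd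
  have htI : t ∈ Icc 0 L := Ioo_subset_Icc_self htmem
  have hFd := htF (by rwa [uIcc_of_le hL]) 0 (by simp [hL])
  have hle := abs_deriv_le_of_eventually_abs_sub_le htd.hasDerivAt hFd ?_
  · rw [abs_of_nonneg ENNReal.toReal_nonneg] at hle
    exact (ENNReal.ofReal_le_iff_le_toReal (htlt htI).ne).2 hle
  · filter_upwards [Ioo_mem_nhds htmem.1 htmem.2] with s hs
    have hsub : ∀ a ∈ Icc 0 L, IntervalIntegrable (fun t => (G t).toReal) volume 0 a := by
      intro a ha
      refine hii.mono_set ?_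
      rw [uIcc_of_le ha.1, uIcc_of_le hL]
      exact Icc_subset_Icc le_rfl ha.2
    rw [intervalIntegral.integral_interval_sub_left (hsub s (Ioo_subset_Icc_self hs)) (hsub t htI)]
    rcases le_total s t with hst | hst
    · rw [intervalIntegral.integral_symm, abs_neg]
      exact (key s t hs.1.le hst htI.2).trans (le_abs_self _)
    · rw [abs_sub_comm]
      exact (key t s htI.1 hst hs.2.le).trans (le_abs_self _)

theorem ofReal_abs_sub_le_lintegral_of_ae_deriv_le {f : ℝ → ℝ} {G : ℝ → ℝ≥0∞} {L : ℝ} {K : ℝ≥0}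
    (hL : 0 ≤ L) (hf : LipschitzOnWith K f (Icc 0 L))
    (h : ∀ᵐ t, t ∈ Ioo 0 L → ENNReal.ofReal |deriv f t| ≤ G t) :
    ENNReal.ofReal |f 0 - f L| ≤ ∫⁻ t in Icc 0 L, G t := by
  have hac : AbsolutelyContinuousOnInterval f 0 L :=
    LipschitzOnWith.absolutelyContinuousOnInterval (by rwa [uIcc_of_le hL])
  rw [abs_sub_comm, ← hac.integral_deriv_eq_sub, intervalIntegral.integral_of_le hL,
    setLIntegral_congr Ioo_ae_eq_Icc.symm, integral_Ioc_eq_integral_Ioo, ← Real.norm_eq_abs,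
    ofReal_norm]
  refine (enorm_integral_le_lintegral_enorm _).trans ?_
  refine lintegral_mono_ae ?_
  rw [ae_restrict_iff' measurableSet_Ioo]
  filter_upwards [h] with t ht htm
  rw [← ofReal_norm, Real.norm_eq_abs]
  exact ht htm

theorem deriv_eq_of_le_of_eq {w k : ℝ → ℝ} {t : ℝ} (hw : DifferentiableAt ℝ w t)
    (hk : DifferentiableAt ℝ k t) (h : (∀ s, k s ≤ w s) ∨ ∀ s, w s ≤ k s) (ht : w t = k t) :
    deriv w t = deriv k t := by
  rw [← sub_eq_zero, ← deriv_fun_sub hw hk]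
  rcases h with h | h
  · refine IsLocalMin.deriv_eq_zero (Eventually.of_forall fun s => ?_)
    simpa [ht] using h s
  · refine IsLocalMax.deriv_eq_zero (Eventually.of_forall fun s => ?_)
    simpa [ht] using h s

end RealLine

namespace Curve

variable {X : Type*} [MetricSpace X]

theorem continuousOn (γ : Curve X) : ContinuousOn γ.toFun (Icc 0 γ.len) :=
  γ.lipschitzOn.continuousOn

/-- The restriction of a curve to the subinterval `[s, t]`. -/
def restrict (γ : Curve X) (s t : ℝ) (hs : 0 ≤ s) (hst : s ≤ t) (ht : t ≤ γ.len) : Curve X where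
  len := t - s
  len_nonneg := sub_nonneg.2 hst
  toFun x := γ.toFun (s + x)
  lipschitzOn := by
    intro x hx y hy
    have := γ.lipschitzOn (x := s + x) ⟨by linarith [hx.1], by linarith [hx.2]⟩
      (y := s + y) ⟨by linarith [hy.1], by linarith [hy.2]⟩
    simpa [edist_add_left] using this

theorem curveLintegral_restrict [MeasurableSpace X] (g : X → ℝ≥0∞) (γ : Curve X) (s t : ℝ)
    (hs : 0 ≤ s) (hst : s ≤ t) (ht : t ≤ γ.len) :
    curveLintegral g (γ.restrict s t hs hst ht) = ∫⁻ x in Icc s t, g (γ.toFun x) := by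
  have hmp : MeasurePreserving (fun x : ℝ => s + x) volume volume :=
    measurePreserving_add_left volume s
  have he : MeasurableEmbedding (fun x : ℝ => s + x) := measurableEmbedding_addLeft s
  have h := hmp.setLIntegral_comp_preimage_emb he (fun x => g (γ.toFun x)) (Icc s t)
  rw [← h]
  simp [curveLintegral, restrict]

/-- A locally Lipschitz function is Lipschitz along a curve. -/
theorem exists_lipschitzOnWith_comp (γ : Curve X) {u : X → ℝ} (hu : LocallyLipschitz u) :
    ∃ K, LipschitzOnWith K (u ∘ γ.toFun) (Icc 0 γ.len) := by
  obtain ⟨K, hK⟩ := LocallyLipschitzOn.exists_lipschitzOnWith_of_compact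
    (isCompact_Icc.image_of_continuousOn γ.continuousOn)
    (hu.locallyLipschitzOn (s := γ.toFun '' Icc 0 γ.len))
  exact ⟨K * 1, hK.comp γ.lipschitzOn (mapsTo_image _ _)⟩

theorem ae_differentiableAt_comp (γ : Curve X) {u : X → ℝ} (hu : LocallyLipschitz u) :
    ∀ᵐ t, t ∈ Ioo 0 γ.len → DifferentiableAt ℝ (u ∘ γ.toFun) t := by
  obtain ⟨K, hK⟩ := γ.exists_lipschitzOnWith_comp hu
  filter_upwards [hK.ae_differentiableWithinAt_of_mem_real] with t ht htm
  exact (ht (Ioo_subset_Icc_self htm)).differentiableAt (Icc_mem_nhds htm.1 htm.2)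

variable [MeasurableSpace X] [BorelSpace X]

theorem ae_ofReal_abs_deriv_comp_le (γ : Curve X) {u : X → ℝ} {g : X → ℝ≥0∞}
    (hu : LocallyLipschitz u) (hg : IsUpperGradient g u) (hfin : curveLintegral g γ ≠ ⊤) :
    ∀ᵐ t, t ∈ Ioo 0 γ.len → ENNReal.ofReal |deriv (u ∘ γ.toFun) t| ≤ g (γ.toFun t) := by
  have hmeas : AEMeasurable (fun t => g (γ.toFun t)) (volume.restrict (Icc 0 γ.len)) :=
    hg.1.comp_aemeasurable (γ.continuousOn.aemeasurable measurableSet_Icc)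
  have hsub : ∀ s t, 0 ≤ s → s ≤ t → t ≤ γ.len →
      ENNReal.ofReal |(u ∘ γ.toFun) s - (u ∘ γ.toFun) t| ≤ ∫⁻ x in Icc s t, g (γ.toFun x) := by
    intro s t hs hst ht
    rw [← γ.curveLintegral_restrict g s t hs hst ht]
    by_cases hc : (γ.restrict s t hs hst ht).IsNonconstant
    · simpa [UpperGradIneq, restrict] using hg.2 _ hc
    · have heq : γ.toFun s = γ.toFun t := by
        by_contra hne
        refine hc ⟨0, ⟨le_rfl, sub_nonneg.2 hst⟩, t - s, ⟨sub_nonneg.2 hst, le_rfl⟩, ?_⟩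
        simpa [restrict] using hne
      simp [heq]
  filter_upwards [ae_ofReal_abs_deriv_le γ.len_nonneg hmeas hfin hsub,
    γ.ae_differentiableAt_comp hu] with t ht htd htm using ht htm (htd htm)

/-- Gluing upper gradients of two functions `u`, `v` along a curve, for a function `w` that equals
`u` on `S`, equals `v` off `S`, and is comparable to both. -/
theorem upperGradIneq_piecewise (γ : Curve X) {u v w : X → ℝ} {g h : X → ℝ≥0∞} {S : Set X}
    [DecidablePred (· ∈ S)]
    (hu : LocallyLipschitz u) (hv : LocallyLipschitz v) (hw : LocallyLipschitz w)
    (hg : IsUpperGradient g u) (hh : IsUpperGradient h v)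
    (hgfin : curveLintegral g γ ≠ ⊤) (hhfin : curveLintegral h γ ≠ ⊤)
    (hwu : (∀ x, u x ≤ w x) ∨ ∀ x, w x ≤ u x) (hwv : (∀ x, v x ≤ w x) ∨ ∀ x, w x ≤ v x)
    (hS : ∀ x ∈ S, w x = u x) (hSc : ∀ x ∉ S, w x = v x) :
    UpperGradIneq (S.piecewise g h) w γ := by
  obtain ⟨K, hK⟩ := γ.exists_lipschitzOnWith_comp hw
  refine ofReal_abs_sub_le_lintegral_of_ae_deriv_le γ.len_nonneg hK ?_
  filter_upwards [γ.ae_differentiableAt_comp hu, γ.ae_differentiableAt_comp hv,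
    γ.ae_differentiableAt_comp hw, γ.ae_ofReal_abs_deriv_comp_le hu hg hgfin,
    γ.ae_ofReal_abs_deriv_comp_le hv hh hhfin] with t hut hvt hwt hgt hht htm
  by_cases htS : γ.toFun t ∈ S
  · rw [Set.piecewise_eq_of_mem _ _ _ htS, deriv_eq_of_le_of_eq (hwt htm) (hut htm)
      (hwu.imp (fun H s => H _) fun H s => H _) (hS _ htS)]
    exact hgt htm
  · rw [Set.piecewise_eq_of_notMem _ _ _ htS, deriv_eq_of_le_of_eq (hwt htm) (hvt htm)
      (hwv.imp (fun H s => H _) fun H s => H _) (hSc _ htS)]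
    exact hht htm

end Curve

section Sequences

theorem tendsto_inv_natCast_add_one :
    Tendsto (fun n : ℕ => ((n : ℝ≥0∞) + 1)⁻¹) atTop (𝓝 0) := by
  simpa [Function.comp_def] using
    ENNReal.tendsto_inv_nat_nhds_zero.comp (tendsto_add_atTop_nat 1)

theorem liminf_le_of_le_add_inv {a : ℕ → ℝ≥0∞} {c : ℝ≥0∞}
    (h : ∀ n : ℕ, a n ≤ c + ((n : ℝ≥0∞) + 1)⁻¹) : liminf a atTop ≤ c := by
  have hlim : Tendsto (fun n : ℕ => c + ((n : ℝ≥0∞) + 1)⁻¹) atTop (𝓝 c) := by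
    simpa using tendsto_const_nhds.add tendsto_inv_natCast_add_one
  rw [← hlim.liminf_eq]
  exact liminf_le_liminf (Eventually.of_forall h)

theorem liminf_add_liminf_le {a b : ℕ → ℝ≥0∞} :
    liminf a atTop + liminf b atTop ≤ liminf (fun n => a n + b n) atTop := by
  have hmono : ∀ c : ℕ → ℝ≥0∞, Monotone fun n => ⨅ i ≥ n, c i := fun c m n hmn =>
    le_iInf₂ fun i hi => iInf₂_le i (hmn.trans hi)
  simp only [liminf_eq_iSup_iInf_of_nat]
  rw [ENNReal.iSup_add_iSup_of_monotone (hmono a) (hmono b)]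
  exact iSup_mono fun n => le_iInf₂ fun i hi => add_le_add (iInf₂_le i hi) (iInf₂_le i hi)

end Sequences

section Measurability

variable {X : Type*} [MeasurableSpace X]

theorem measurable_ofReal_abs_sub {u v : X → ℝ} (hu : Measurable u) (hv : Measurable v) :
    Measurable fun x => ENNReal.ofReal |u x - v x| :=
  (hu.sub hv).abs.ennreal_ofReal

theorem measurable_indicator_one {A : Set X} (hA : MeasurableSet A) :
    Measurable (A.indicator fun _ => (1 : ℝ)) :=
  measurable_const.indicator hA

theorem min_measure_le_lintegral_abs_indicator_sub {μ : Measure X} {B Q : Set X}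
    (hQ : MeasurableSet Q) (hB : MeasurableSet B) (c : ℝ) :
    min (μ (Q ∩ B)) (μ (Q \ B)) ≤
      ∫⁻ x in Q, ENNReal.ofReal |B.indicator (fun _ => (1 : ℝ)) x - c| ∂μ := by
  have hunion : ∫⁻ x in Q, ENNReal.ofReal |B.indicator (fun _ => (1 : ℝ)) x - c| ∂μ =
      ENNReal.ofReal |1 - c| * μ (Q ∩ B) + ENNReal.ofReal |0 - c| * μ (Q \ B) := by
    rw [← lintegral_inter_add_sdiff _ Q hB, ← setLIntegral_const, ← setLIntegral_const]
    congr 1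
    · exact setLIntegral_congr_fun (hQ.inter hB) fun x hx => by simp [hx.2]
    · exact setLIntegral_congr_fun (hQ.diff hB) fun x hx => by simp [hx.2]
  rw [hunion]
  have hone : 1 ≤ ENNReal.ofReal |1 - c| + ENNReal.ofReal |0 - c| := by
    rw [← ENNReal.ofReal_add (abs_nonneg _) (abs_nonneg _), ← ENNReal.ofReal_one]
    refine ENNReal.ofReal_le_ofReal ?_
    have := abs_sub (1 - c) (0 - c)
    simpa using this
  calc min (μ (Q ∩ B)) (μ (Q \ B))
      ≤ (ENNReal.ofReal |1 - c| + ENNReal.ofReal |0 - c|) * min (μ (Q ∩ B)) (μ (Q \ B)) :=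
        le_mul_of_one_le_left' hone
    _ ≤ _ := by
        rw [add_mul]
        gcongr
        · exact min_le_left _ _
        · exact min_le_right _ _

end Measurability

section Perimeter

variable {X : Type*} [MetricSpace X]

theorem locLipschitzOn_univ {u : X → ℝ} : LocLipschitzOn u univ ↔ LocallyLipschitz u := by
  simp [LocLipschitzOn, LocallyLipschitz]

theorem curveLintegral_mono {g h : X → ℝ≥0∞} (hgh : ∀ x, g x ≤ h x) (γ : Curve X) :
    curveLintegral g γ ≤ curveLintegral h γ :=
  lintegral_mono fun _ => hgh _

variable [MeasurableSpace X] {μ : Measure X}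

theorem totalVar_univ (v : X → ℝ) : totalVar μ v univ = variationOn μ v univ := by
  refine le_antisymm (iInf₂_le univ ⟨isOpen_univ, le_rfl⟩) (le_iInf₂ fun W hW => ?_)
  rw [univ_subset_iff.1 hW.2]

theorem gradEnergy_le_of_upperGradIneq {u : X → ℝ} {g : X → ℝ≥0∞} (hg : Measurable g)
    {Γ : Set (Curve X)} (hΓ : mod1 μ Γ = 0) (h : ∀ γ ∉ Γ, UpperGradIneq g u γ) :
    gradEnergy μ u univ ≤ ∫⁻ x, g x ∂μ := by
  refine (iInf₂_le g ⟨hg, le_antisymm ?_ bot_le⟩).trans (by simp)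
  rw [← hΓ]
  refine le_iInf₂ fun ρ hρ => iInf₂_le ρ ⟨hρ.1, fun γ hγ => hρ.2 γ ?_⟩
  by_contra hγΓ
  exact hγ.2.2 (h γ hγΓ)

theorem gradEnergy_one_sub (u : X → ℝ) :
    gradEnergy μ (fun x => 1 - u x) univ = gradEnergy μ u univ := by
  have h : ∀ (g : X → ℝ≥0∞) (γ : Curve X),
      UpperGradIneq g (fun x => 1 - u x) γ ↔ UpperGradIneq g u γ := by
    intro g γ
    rw [UpperGradIneq, UpperGradIneq, abs_sub_comm (u _)]
    simp
  simp only [gradEnergy, IsWeakUpperGradientOn, h]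

theorem tendstoL1loc_const (v : X → ℝ) : TendstoL1loc μ univ (fun _ => v) v :=
  fun _ _ _ _ => by simp

theorem variationOn_le_liminf {u : ℕ → X → ℝ} {v : X → ℝ} (hu : ∀ n, LocallyLipschitz (u n))
    (huv : TendstoL1loc μ univ u v) :
    variationOn μ v univ ≤ liminf (fun n => gradEnergy μ (u n) univ) atTop :=
  iInf₂_le u ⟨fun n => locLipschitzOn_univ.2 (hu n), huv⟩

theorem exists_approx_of_variationOn_ne_top [ProperSpace X] {v : X → ℝ} (x₀ : X)
    (hv : variationOn μ v univ ≠ ⊤) :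
    ∃ u : ℕ → X → ℝ, (∀ n, LocallyLipschitz (u n)) ∧
      (∀ n : ℕ, ∫⁻ x in ball x₀ n, ENNReal.ofReal |u n x - v x| ∂μ ≤ ((n : ℝ≥0∞) + 1)⁻¹) ∧
      ∀ n : ℕ, gradEnergy μ (u n) univ ≤ variationOn μ v univ + ((n : ℝ≥0∞) + 1)⁻¹ := by
  have hex : ∀ n : ℕ, ∃ u : X → ℝ, LocallyLipschitz u ∧
      ∫⁻ x in ball x₀ n, ENNReal.ofReal |u x - v x| ∂μ ≤ ((n : ℝ≥0∞) + 1)⁻¹ ∧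
      gradEnergy μ u univ ≤ variationOn μ v univ + ((n : ℝ≥0∞) + 1)⁻¹ := by
    intro n
    have hpos : ((n : ℝ≥0∞) + 1)⁻¹ ≠ 0 := by simp
    have hlt := ENNReal.lt_add_right hv hpos
    conv_lhs at hlt => rw [variationOn]
    simp only [iInf_lt_iff, exists_prop] at hlt
    obtain ⟨u, ⟨hu, huv⟩, hlim⟩ := hlt
    have hball := huv (ball x₀ n) isOpen_ball
      ((isCompact_closedBall x₀ n).of_isClosed_subset isClosed_closure
        closure_ball_subset_closedBall) (subset_univ _)
    have hev := hball.eventually (ge_mem_nhds (pos_iff_ne_zero.2 hpos))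
    obtain ⟨i, hi₁, hi₂⟩ := ((frequently_lt_of_liminf_lt (by isBoundedDefault) hlim).and_eventually
      hev).exists
    exact ⟨u i, locLipschitzOn_univ.1 (hu i), hi₂, hi₁.le⟩
  choose u hu using hex
  exact ⟨u, fun n => (hu n).1, fun n => (hu n).2.1, fun n => (hu n).2.2⟩

theorem perimeter_congr_ae {A B : Set X} (h : A =ᵐ[μ] B) :
    perimeter μ A univ = perimeter μ B univ := by
  have hind : ∀ᵐ x ∂μ, A.indicator (fun _ => (1 : ℝ)) x = B.indicator (fun _ => (1 : ℝ)) x :=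
    indicator_ae_eq_of_ae_eq_set h
  have hT : ∀ u : ℕ → X → ℝ, TendstoL1loc μ univ u (A.indicator fun _ => (1 : ℝ)) ↔
      TendstoL1loc μ univ u (B.indicator fun _ => (1 : ℝ)) := by
    intro u
    have hint : ∀ (W : Set X) (i : ℕ),
        ∫⁻ x in W, ENNReal.ofReal |u i x - A.indicator (fun _ => (1 : ℝ)) x| ∂μ =
        ∫⁻ x in W, ENNReal.ofReal |u i x - B.indicator (fun _ => (1 : ℝ)) x| ∂μ := by
      intro W i
      refine lintegral_congr_ae ?_
      filter_upwards [ae_restrict_of_ae hind] with x hx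
      rw [hx]
    simp only [TendstoL1loc, hint]
  simp only [perimeter, totalVar_univ, variationOn, hT]

theorem TendstoL1loc.of_lintegral_ball_le [ProperSpace X] {u w : ℕ → X → ℝ} {v : X → ℝ} (x₀ : X)
    (hw : ∀ n, Measurable (w n)) (hv : Measurable v) (hwv : TendstoL1loc μ univ w v)
    (h : ∀ n : ℕ, ∫⁻ x in ball x₀ n, ENNReal.ofReal |u n x - w n x| ∂μ ≤ ((n : ℝ≥0∞) + 1)⁻¹) :
    TendstoL1loc μ univ u v := by
  intro W hWo hWc hWu
  obtain ⟨r, hr⟩ := hWc.isBounded.subset_ball x₀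
  have hlim : Tendsto (fun n : ℕ => ((n : ℝ≥0∞) + 1)⁻¹ +
      ∫⁻ x in W, ENNReal.ofReal |w n x - v x| ∂μ) atTop (𝓝 0) := by
    simpa using tendsto_inv_natCast_add_one.add (hwv W hWo hWc hWu)
  refine tendsto_of_tendsto_of_tendsto_of_le_of_le' tendsto_const_nhds hlim
    (Eventually.of_forall fun _ => zero_le) ?_
  filter_upwards [eventually_ge_atTop ⌈r⌉₊] with n hn
  have hsub : W ⊆ ball x₀ n :=
    (subset_closure.trans hr).trans (ball_subset_ball (Nat.ceil_le.1 hn))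
  calc _ ≤ ∫⁻ x in W, (ENNReal.ofReal |u n x - w n x| + ENNReal.ofReal |w n x - v x|) ∂μ := by
        refine lintegral_mono fun x => ?_
        rw [← ENNReal.ofReal_add (abs_nonneg _) (abs_nonneg _)]
        exact ENNReal.ofReal_le_ofReal (abs_sub_le _ _ _)
    _ = ∫⁻ x in W, ENNReal.ofReal |u n x - w n x| ∂μ +
          ∫⁻ x in W, ENNReal.ofReal |w n x - v x| ∂μ :=
        lintegral_add_right _ (measurable_ofReal_abs_sub (hw n) hv)
    _ ≤ _ := by
        gcongr
        exact (lintegral_mono_set hsub).trans (h n)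

theorem TendstoL1loc.of_abs_sub_le_add {u₁ u₂ w : ℕ → X → ℝ} {v₁ v₂ v : X → ℝ}
    (h₁ : TendstoL1loc μ univ u₁ v₁) (h₂ : TendstoL1loc μ univ u₂ v₂)
    (hu₁ : ∀ n, Measurable (u₁ n)) (hv₁ : Measurable v₁)
    (h : ∀ n x, |w n x - v x| ≤ |u₁ n x - v₁ x| + |u₂ n x - v₂ x|) :
    TendstoL1loc μ univ w v := by
  intro W hWo hWc hWu
  have hlim := (h₁ W hWo hWc hWu).add (h₂ W hWo hWc hWu)
  rw [add_zero] at hlim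
  refine tendsto_of_tendsto_of_tendsto_of_le_of_le tendsto_const_nhds hlim
    (fun _ => zero_le) fun n => ?_
  rw [← lintegral_add_left (measurable_ofReal_abs_sub (hu₁ n) hv₁)]
  refine lintegral_mono fun x => ?_
  rw [← ENNReal.ofReal_add (abs_nonneg _) (abs_nonneg _)]
  exact ENNReal.ofReal_le_ofReal (h n x)

/-- Lower semicontinuity of the total variation. -/
theorem variationOn_le_of_tendstoL1loc [ProperSpace X] {w : ℕ → X → ℝ} {v : X → ℝ} {c : ℝ≥0∞}
    (x₀ : X) (hw : ∀ n, Measurable (w n)) (hv : Measurable v) (hwv : TendstoL1loc μ univ w v)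
    (hc : c ≠ ⊤) (h : ∀ n, variationOn μ (w n) univ ≤ c) : variationOn μ v univ ≤ c := by
  choose u hu₁ hu₂ hu₃ using fun n =>
    exists_approx_of_variationOn_ne_top x₀ (ne_top_of_le_ne_top hc (h n))
  refine (variationOn_le_liminf (fun n => hu₁ n n)
    (hwv.of_lintegral_ball_le x₀ hw hv fun n => hu₂ n n)).trans ?_
  exact liminf_le_of_le_add_inv fun n => (hu₃ n n).trans (by gcongr; exact h n)

theorem perimeter_compl (A : Set X) : perimeter μ Aᶜ univ = perimeter μ A univ := by
  have key : ∀ B : Set X, perimeter μ Bᶜ univ ≤ perimeter μ B univ := by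
    intro B
    simp only [perimeter, totalVar_univ]
    refine le_iInf₂ fun u hu => ?_
    have hle := variationOn_le_liminf (μ := μ) (u := fun n x => 1 - u n x)
      (v := Bᶜ.indicator fun _ => (1 : ℝ))
      (fun n => ?_) fun W hWo hWc hWu => ?_
    · simpa only [gradEnergy_one_sub] using hle
    · refine (LipschitzWith.locallyLipschitz (K := 1) ?_ : LocallyLipschitz fun t : ℝ => 1 - t).comp
        (locLipschitzOn_univ.1 (hu.1 n))
      exact LipschitzWith.of_dist_le_mul fun x y => by
        simp only [Real.dist_eq, abs_sub_comm x y, NNReal.coe_one, one_mul]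
        exact le_of_eq (by congr 1; ring)
    · convert hu.2 W hWo hWc hWu using 5 with n x
      by_cases hx : x ∈ B
      · simp [hx, abs_sub_comm]
      · simp [hx]
  refine le_antisymm (key A) ?_
  simpa using key Aᶜ

variable [BorelSpace X]

theorem aemeasurable_comp_curve {g : X → ℝ≥0∞} (hg : Measurable g) (γ : Curve X) :
    AEMeasurable (fun t => g (γ.toFun t)) (volume.restrict (Icc 0 γ.len)) :=
  hg.comp_aemeasurable (γ.continuousOn.aemeasurable measurableSet_Icc)

theorem curveLintegral_add {g h : X → ℝ≥0∞} (hg : Measurable g) (γ : Curve X) :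
    curveLintegral (fun x => g x + h x) γ = curveLintegral g γ + curveLintegral h γ :=
  lintegral_add_left' (aemeasurable_comp_curve hg γ) _

theorem mod1_eq_zero_of_curveLintegral_eq_top {Γ : Set (Curve X)} {ρ : X → ℝ≥0∞}
    (hρ : Measurable ρ) (hfin : ∫⁻ x, ρ x ∂μ ≠ ⊤) (h : ∀ γ ∈ Γ, curveLintegral ρ γ = ⊤) :
    mod1 μ Γ = 0 := by
  refine le_antisymm (ENNReal.le_of_forall_pos_le_add fun ε hε _ => ?_) bot_le
  rw [zero_add]
  obtain ⟨c, hc, hcε⟩ := ENNReal.exists_nnreal_pos_mul_lt hfin (ENNReal.coe_ne_zero.2 hε.ne')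
  have hc' : (c : ℝ≥0∞) ≠ 0 := ENNReal.coe_ne_zero.2 hc.ne'
  have htop : ∀ γ ∈ Γ, 1 ≤ curveLintegral (fun x => c * ρ x) γ := by
    intro γ hγ
    have : curveLintegral (fun x => c * ρ x) γ = c * curveLintegral ρ γ :=
      lintegral_const_mul'' _ (aemeasurable_comp_curve hρ γ)
    rw [this, h γ hγ, ENNReal.mul_top hc']
    exact le_top
  refine (iInf₂_le (fun x => c * ρ x) ⟨hρ.const_mul _, htop⟩).trans ?_
  rw [lintegral_const_mul _ hρ]
  exact hcε.le

theorem exists_curveLintegral_eq_top {Γ : Set (Curve X)} (hΓ : mod1 μ Γ = 0) {ε : ℝ≥0∞}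
    (hε : ε ≠ 0) :
    ∃ ρ : X → ℝ≥0∞, Measurable ρ ∧ ∫⁻ x, ρ x ∂μ < ε ∧ ∀ γ ∈ Γ, curveLintegral ρ γ = ⊤ := by
  obtain ⟨δ, hδ, hsum⟩ := ENNReal.exists_pos_sum_of_countable' hε ℕ
  have hex : ∀ n, ∃ ρ : X → ℝ≥0∞, (Measurable ρ ∧ ∀ γ ∈ Γ, 1 ≤ curveLintegral ρ γ) ∧
      ∫⁻ x, ρ x ∂μ < δ n := by
    intro n
    have : mod1 μ Γ < δ n := hΓ ▸ hδ n
    simpa only [mod1, iInf_lt_iff, exists_prop] using this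
  choose ρ hρ hlt using hex
  refine ⟨fun x => ∑' n, ρ n x, Measurable.tsum fun n => (hρ n).1, ?_, fun γ hγ => ?_⟩
  · rw [lintegral_tsum fun n => (hρ n).1.aemeasurable]
    exact (ENNReal.tsum_le_tsum fun n => (hlt n).le).trans_lt hsum
  · have : curveLintegral (fun x => ∑' n, ρ n x) γ = ∑' n, curveLintegral (ρ n) γ :=
      lintegral_tsum fun n => aemeasurable_comp_curve (hρ n).1 γ
    rw [this, eq_top_iff, ← ENNReal.tsum_const_eq_top_of_ne_zero (α := ℕ) one_ne_zero]
    exact ENNReal.tsum_le_tsum fun n => (hρ n).2 γ hγ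

theorem exists_isUpperGradient_of_gradEnergy_lt {u : X → ℝ} {c : ℝ≥0∞}
    (h : gradEnergy μ u univ < c) :
    ∃ g : X → ℝ≥0∞, IsUpperGradient g u ∧ ∫⁻ x, g x ∂μ < c := by
  simp only [gradEnergy, iInf_lt_iff, exists_prop, Measure.restrict_univ] at h
  obtain ⟨g, ⟨hg, hmod⟩, hlt⟩ := h
  obtain ⟨ρ, hρ, hρlt, hρtop⟩ := exists_curveLintegral_eq_top hmod (tsub_pos_of_lt hlt).ne'
  refine ⟨fun x => g x + ρ x, ⟨hg.add hρ, fun γ hγ => ?_⟩, ?_⟩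
  · by_cases hgγ : UpperGradIneq g u γ
    · exact hgγ.trans (curveLintegral_mono (fun _ => le_self_add) γ)
    · have : curveLintegral (fun x => g x + ρ x) γ = ⊤ := by
        rw [curveLintegral_add hg, hρtop γ ⟨hγ, fun _ _ => mem_univ _, hgγ⟩, add_top]
      rw [UpperGradIneq, this]
      exact le_top
  · rw [lintegral_add_left hg, add_comm]
    exact lt_tsub_iff_right.1 hρlt

theorem gradEnergy_max_add_gradEnergy_min_le {u v : X → ℝ} (hu : LocallyLipschitz u)
    (hv : LocallyLipschitz v) :
    gradEnergy μ (fun x => max (u x) (v x)) univ + gradEnergy μ (fun x => min (u x) (v x)) univ ≤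
      gradEnergy μ u univ + gradEnergy μ v univ := by
  classical
  refine ENNReal.le_of_forall_pos_le_add fun ε hε hfin => ?_
  obtain ⟨hufin, hvfin⟩ := ENNReal.add_lt_top.1 hfin
  have hε2 : ((ε / 2 : ℝ≥0) : ℝ≥0∞) ≠ 0 := by simpa using hε.ne'
  obtain ⟨g, hg, hglt⟩ := exists_isUpperGradient_of_gradEnergy_lt
    (ENNReal.lt_add_right hufin.ne hε2)
  obtain ⟨h, hh, hhlt⟩ := exists_isUpperGradient_of_gradEnergy_lt
    (ENNReal.lt_add_right hvfin.ne hε2)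
  set S : Set X := {x | v x < u x} with hS
  have hSm : MeasurableSet S := measurableSet_lt hv.continuous.measurable hu.continuous.measurable
  set Γ : Set (Curve X) := {γ | curveLintegral (fun x => g x + h x) γ = ⊤} with hΓdef
  have hghfin : ∫⁻ x, (g x + h x) ∂μ ≠ ⊤ := by
    rw [lintegral_add_left hg.1]
    exact ENNReal.add_ne_top.2 ⟨hglt.ne_top, hhlt.ne_top⟩
  have hΓ : mod1 μ Γ = 0 :=
    mod1_eq_zero_of_curveLintegral_eq_top (hg.1.add hh.1) hghfin fun _ hγ => hγ
  have hΓg : ∀ γ ∉ Γ, curveLintegral g γ ≠ ⊤ ∧ curveLintegral h γ ≠ ⊤ := by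
    intro γ hγ
    rwa [hΓdef, mem_ofPred_eq, curveLintegral_add hg.1, ← Ne, ENNReal.add_ne_top] at hγ
  have hmax : gradEnergy μ (fun x => max (u x) (v x)) univ ≤ ∫⁻ x, S.piecewise g h x ∂μ :=
    gradEnergy_le_of_upperGradIneq (hg.1.piecewise hSm hh.1) hΓ fun γ hγ =>
      γ.upperGradIneq_piecewise hu hv (hu.max hv) hg hh (hΓg γ hγ).1 (hΓg γ hγ).2
        (Or.inl fun _ => le_max_left _ _) (Or.inl fun _ => le_max_right _ _)
        (fun x hx => max_eq_left (le_of_lt hx)) fun x hx => max_eq_right (not_lt.1 hx)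
  have hmin : gradEnergy μ (fun x => min (u x) (v x)) univ ≤ ∫⁻ x, S.piecewise h g x ∂μ :=
    gradEnergy_le_of_upperGradIneq (hh.1.piecewise hSm hg.1) hΓ fun γ hγ =>
      γ.upperGradIneq_piecewise hv hu (hu.min hv) hh hg (hΓg γ hγ).2 (hΓg γ hγ).1
        (Or.inr fun _ => min_le_right _ _) (Or.inr fun _ => min_le_left _ _)
        (fun x hx => min_eq_right (le_of_lt hx)) fun x hx => min_eq_left (not_lt.1 hx)
  calc _ ≤ ∫⁻ x, S.piecewise g h x ∂μ + ∫⁻ x, S.piecewise h g x ∂μ := add_le_add hmax hmin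
    _ = ∫⁻ x, g x ∂μ + ∫⁻ x, h x ∂μ := by
      rw [← lintegral_add_left (hg.1.piecewise hSm hh.1), ← lintegral_add_left hg.1]
      refine lintegral_congr fun x => ?_
      by_cases hx : x ∈ S
      · simp [hx]
      · simp [hx, add_comm]
    _ ≤ (gradEnergy μ u univ + (ε / 2 : ℝ≥0)) + (gradEnergy μ v univ + (ε / 2 : ℝ≥0)) :=
      add_le_add hglt.le hhlt.le
    _ = _ := by
      rw [add_add_add_comm, ← ENNReal.coe_add, add_halves]

theorem gradEnergy_zero : gradEnergy μ (fun _ => 0) univ = 0 := by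
  refine le_antisymm ?_ bot_le
  refine (iInf₂_le (fun _ => 0) ⟨measurable_const, ?_⟩).trans (by simp)
  exact mod1_eq_zero_of_curveLintegral_eq_top (ρ := 0) measurable_const (by simp)
    fun γ hγ => absurd (by simp [UpperGradIneq]) hγ.2.2

/-- Submodularity of the total variation. -/
theorem variationOn_max_add_variationOn_min_le [ProperSpace X] {v₁ v₂ : X → ℝ} (x₀ : X)
    (hv₁ : Measurable v₁) (hv₂ : Measurable v₂) :
    variationOn μ (fun x => max (v₁ x) (v₂ x)) univ +
        variationOn μ (fun x => min (v₁ x) (v₂ x)) univ ≤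
      variationOn μ v₁ univ + variationOn μ v₂ univ := by
  by_cases hfin : variationOn μ v₁ univ + variationOn μ v₂ univ = ⊤
  · rw [hfin]
    exact le_top
  obtain ⟨hfin₁, hfin₂⟩ := ENNReal.add_ne_top.1 hfin
  obtain ⟨u₁, hu₁, hL₁, hE₁⟩ := exists_approx_of_variationOn_ne_top x₀ hfin₁
  obtain ⟨u₂, hu₂, hL₂, hE₂⟩ := exists_approx_of_variationOn_ne_top x₀ hfin₂
  have hT₁ := (tendstoL1loc_const v₁).of_lintegral_ball_le x₀ (fun _ => hv₁) hv₁ hL₁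
  have hT₂ := (tendstoL1loc_const v₂).of_lintegral_ball_le x₀ (fun _ => hv₂) hv₂ hL₂
  have hmax : TendstoL1loc μ univ (fun n x => max (u₁ n x) (u₂ n x))
      fun x => max (v₁ x) (v₂ x) :=
    hT₁.of_abs_sub_le_add hT₂ (fun n => (hu₁ n).continuous.measurable) hv₁ fun n x =>
      (abs_max_sub_max_le_max _ _ _ _).trans (max_le_add_of_nonneg (abs_nonneg _) (abs_nonneg _))
  have hmin : TendstoL1loc μ univ (fun n x => min (u₁ n x) (u₂ n x))
      fun x => min (v₁ x) (v₂ x) :=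
    hT₁.of_abs_sub_le_add hT₂ (fun n => (hu₁ n).continuous.measurable) hv₁ fun n x =>
      (abs_min_sub_min_le_max _ _ _ _).trans (max_le_add_of_nonneg (abs_nonneg _) (abs_nonneg _))
  refine (add_le_add (variationOn_le_liminf (fun n => (hu₁ n).max (hu₂ n)) hmax)
    (variationOn_le_liminf (fun n => (hu₁ n).min (hu₂ n)) hmin)).trans ?_
  refine liminf_add_liminf_le.trans ?_
  have hlim : Tendsto (fun n : ℕ => (variationOn μ v₁ univ + ((n : ℝ≥0∞) + 1)⁻¹) +
      (variationOn μ v₂ univ + ((n : ℝ≥0∞) + 1)⁻¹)) atTop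
      (𝓝 (variationOn μ v₁ univ + variationOn μ v₂ univ)) := by
    simpa using (tendsto_const_nhds.add tendsto_inv_natCast_add_one).add
      (tendsto_const_nhds.add tendsto_inv_natCast_add_one)
  rw [← hlim.liminf_eq]
  refine liminf_le_liminf (Eventually.of_forall fun n => ?_)
  exact (gradEnergy_max_add_gradEnergy_min_le (hu₁ n) (hu₂ n)).trans (add_le_add (hE₁ n) (hE₂ n))

theorem perimeter_union_add_perimeter_inter_le [ProperSpace X] {A B : Set X} (x₀ : X)
    (hA : MeasurableSet A) (hB : MeasurableSet B) :
    perimeter μ (A ∪ B) univ + perimeter μ (A ∩ B) univ ≤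
      perimeter μ A univ + perimeter μ B univ := by
  simp only [perimeter, totalVar_univ]
  convert variationOn_max_add_variationOn_min_le (μ := μ) x₀ (measurable_indicator_one hA)
    (measurable_indicator_one hB) using 3
  · ext x
    by_cases hxA : x ∈ A <;> by_cases hxB : x ∈ B <;> simp [hxA, hxB]
  · ext x
    by_cases hxA : x ∈ A <;> by_cases hxB : x ∈ B <;> simp [hxA, hxB]

theorem perimeter_empty : perimeter μ (∅ : Set X) univ = 0 := by
  simp only [perimeter, totalVar_univ, indicator_empty]
  refine le_antisymm ?_ bot_le
  refine (variationOn_le_liminf (u := fun _ _ => 0) (fun _ => LocallyLipschitz.const 0)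
    (tendstoL1loc_const _)).trans ?_
  simp [gradEnergy_zero]

theorem perimeter_union_le [ProperSpace X] {A B : Set X} (x₀ : X)
    (hA : MeasurableSet A) (hB : MeasurableSet B) :
    perimeter μ (A ∪ B) univ ≤ perimeter μ A univ + perimeter μ B univ :=
  le_self_add.trans (perimeter_union_add_perimeter_inter_le x₀ hA hB)

theorem perimeter_iUnion_le [ProperSpace X] (x₀ : X) (hball : ∀ n : ℕ, μ (ball x₀ n) < ⊤)
    {G : ℕ → Set X} (hG : ∀ n, MeasurableSet (G n)) :
    perimeter μ (⋃ n, G n) univ ≤ ∑' n, perimeter μ (G n) univ := by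
  by_cases hfin : ∑' n, perimeter μ (G n) univ = ⊤
  · rw [hfin]
    exact le_top
  set U : ℕ → Set X := fun n => ⋃ i ∈ Finset.range n, G i with hU
  have hUm : ∀ n, MeasurableSet (U n) := fun n =>
    (Finset.range n).measurableSet_biUnion fun i _ => hG i
  have hUle : ∀ n, perimeter μ (U n) univ ≤ ∑ i ∈ Finset.range n, perimeter μ (G i) univ := by
    intro n
    induction n with
    | zero => simp [hU, perimeter_empty]
    | succ n ih =>
      have : U (n + 1) = G n ∪ U n := by
        simp only [hU, Finset.range_add_one, Finset.set_biUnion_insert]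
      rw [this, Finset.sum_range_succ, add_comm]
      exact (perimeter_union_le x₀ (hG n) (hUm n)).trans (by gcongr)
  have hunion : MeasurableSet (⋃ n, G n) := MeasurableSet.iUnion hG
  simp only [perimeter, totalVar_univ] at hUle hfin ⊢
  refine variationOn_le_of_tendstoL1loc x₀ (fun n => measurable_indicator_one (hUm n))
    (measurable_indicator_one hunion) ?_ hfin fun n => (hUle n).trans (ENNReal.sum_le_tsum _)
  intro W hWo hWc _
  obtain ⟨r, hr⟩ := hWc.isBounded.subset_ball x₀
  have hWfin : μ W < ⊤ := (measure_mono ((subset_closure.trans hr).trans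
    (ball_subset_ball (Nat.le_ceil r)))).trans_lt (hball _)
  rw [← lintegral_zero (μ := μ.restrict W)]
  refine tendsto_lintegral_of_dominated_convergence (fun _ => 1)
    (fun n => measurable_ofReal_abs_sub (measurable_indicator_one (hUm n))
      (measurable_indicator_one hunion)) (fun n => Eventually.of_forall fun x => ?_)
    (by simpa using hWfin.ne) (Eventually.of_forall fun x => ?_)
  · rw [← ENNReal.ofReal_one]
    refine ENNReal.ofReal_le_ofReal ?_
    by_cases h₁ : x ∈ U n <;> by_cases h₂ : x ∈ ⋃ n, G n <;> simp only [h₁, h₂,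
      indicator_of_mem, indicator_of_notMem, not_false_eq_true] <;> norm_num
  · refine tendsto_const_nhds.congr' ?_
    by_cases h₂ : x ∈ ⋃ n, G n
    · obtain ⟨m, hm⟩ := mem_iUnion.1 h₂
      filter_upwards [eventually_gt_atTop m] with n hn
      have h₁ : x ∈ U n := mem_biUnion (Finset.mem_coe.2 (Finset.mem_range.2 hn)) hm
      simp [-mem_iUnion, h₁, h₂]
    · filter_upwards with n
      have h₁ : x ∉ U n := fun h => h₂ (iUnion₂_subset (fun i _ => subset_iUnion G i) h)
      simp [-mem_iUnion, h₁, h₂]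

/-- In a space supporting a Poincaré inequality, a set of zero perimeter is trivial in balls. -/
theorem measure_ball_inter_eq_zero_or_of_perimeter_eq_zero [ProperSpace X]
    (hball : ∀ (x : X) (r : ℝ), 0 < r → 0 < μ (ball x r) ∧ μ (ball x r) < ⊤)
    (hPI : SupportsPoincare μ) {B : Set X} (hB : MeasurableSet B)
    (hP : perimeter μ B univ = 0) (x₀ : X) {r : ℝ} (hr : 0 < r) :
    μ (ball x₀ r ∩ B) = 0 ∨ μ (ball x₀ r \ B) = 0 := by
  obtain ⟨C, lam, hC, hlam, hpoinc⟩ := hPI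
  rw [perimeter, totalVar_univ] at hP
  obtain ⟨u, hu, hL, hE⟩ := exists_approx_of_variationOn_ne_top (μ := μ) x₀
    (hP.trans_ne ENNReal.zero_ne_top)
  simp only [hP, zero_add] at hE
  set Q := ball x₀ r
  set m := min (μ (Q ∩ B)) (μ (Q \ B)) with hm
  set M := μ (ball x₀ (lam * r)) with hM
  set K := ENNReal.ofReal (C * r) * μ Q with hK
  have hMpos := hball x₀ (lam * r) (by positivity)
  have hKfin : K ≠ ⊤ := ENNReal.mul_ne_top ENNReal.ofReal_ne_top (hball x₀ r hr).2.ne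
  have hbound : ∀ n : ℕ, ⌈r⌉₊ ≤ n → M * m ≤ (M + K * 2) * ((n : ℝ≥0∞) + 1)⁻¹ := by
    intro n hn
    set δ := ((n : ℝ≥0∞) + 1)⁻¹ with hδ
    have hδ0 : δ ≠ 0 := by simp [hδ]
    have hδtop : δ ≠ ⊤ := by simp [hδ]
    have hlt : gradEnergy μ (u n) univ < 2 * δ := by
      rw [two_mul]
      exact (hE n).trans_lt (ENNReal.lt_add_right hδtop hδ0)
    obtain ⟨g, hg, hglt⟩ := exists_isUpperGradient_of_gradEnergy_lt hlt
    have hint : ∀ (y : X) (s : ℝ), IntegrableOn (u n) (ball y s) μ := by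
      intro y s
      have hfin : μ (closedBall y s) < ⊤ :=
        (measure_mono (closedBall_subset_ball (lt_of_le_of_lt (le_max_left s 0)
          (lt_add_one _)))).trans_lt (hball y (max s 0 + 1) (by positivity)).2
      refine IntegrableOn.mono_set ?_ ball_subset_closedBall
      obtain ⟨b, hb⟩ := (isCompact_closedBall y s).exists_bound_of_continuousOn
        (hu n).continuous.continuousOn
      exact Measure.integrableOn_of_bounded hfin.ne
        (hu n).continuous.measurable.aestronglyMeasurable
        ((ae_restrict_iff' measurableSet_closedBall).2 (Eventually.of_forall hb))
    have hp := hpoinc x₀ r hr (u n) g hint hg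
    set c := ⨍ z in ball x₀ r, u n z ∂μ
    have hsub : Q ⊆ ball x₀ n := ball_subset_ball (Nat.ceil_le.1 hn)
    have hsplit : m ≤ δ + ∫⁻ y in Q, ENNReal.ofReal |u n y - c| ∂μ := by
      calc m ≤ ∫⁻ x in Q, ENNReal.ofReal |B.indicator (fun _ => (1 : ℝ)) x - c| ∂μ :=
            min_measure_le_lintegral_abs_indicator_sub measurableSet_ball hB c
        _ ≤ ∫⁻ x in Q, (ENNReal.ofReal |u n x - B.indicator (fun _ => (1 : ℝ)) x| +
              ENNReal.ofReal |u n x - c|) ∂μ := by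
            refine lintegral_mono fun x => ?_
            rw [← ENNReal.ofReal_add (abs_nonneg _) (abs_nonneg _),
              abs_sub_comm (u n x) (B.indicator _ x)]
            exact ENNReal.ofReal_le_ofReal (abs_sub_le _ _ _)
        _ = _ := lintegral_add_left (measurable_ofReal_abs_sub (hu n).continuous.measurable
            (measurable_indicator_one hB)) _
        _ ≤ _ := by
            gcongr
            exact (lintegral_mono_set hsub).trans (hL n)
    calc M * m ≤ M * (δ + ∫⁻ y in Q, ENNReal.ofReal |u n y - c| ∂μ) := by gcongr
      _ = M * δ + M * ∫⁻ y in Q, ENNReal.ofReal |u n y - c| ∂μ := mul_add _ _ _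
      _ ≤ M * δ + K * (2 * δ) := by
          refine add_le_add le_rfl (hp.trans ?_)
          gcongr
          exact (setLIntegral_le_lintegral _ _).trans hglt.le
      _ = _ := by ring
  have hlim : Tendsto (fun n : ℕ => (M + K * 2) * ((n : ℝ≥0∞) + 1)⁻¹) atTop (𝓝 0) := by
    have := ENNReal.Tendsto.const_mul (a := M + K * 2) tendsto_inv_natCast_add_one
      (Or.inr (ENNReal.add_ne_top.2 ⟨hMpos.2.ne, ENNReal.mul_ne_top hKfin (by simp)⟩))
    simpa using this
  have hzero : M * m ≤ 0 := ge_of_tendsto hlim (eventually_atTop.2 ⟨_, hbound⟩)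
  have hm0 : m = 0 := (mul_eq_zero.1 (le_antisymm hzero bot_le)).resolve_left hMpos.1.ne'
  rcases min_choice (μ (Q ∩ B)) (μ (Q \ B)) with h | h
  · exact Or.inl (h.symm.trans hm0)
  · exact Or.inr (h.symm.trans hm0)

theorem measure_eq_zero_or_compl_of_perimeter_eq_zero [ProperSpace X]
    (hball : ∀ (x : X) (r : ℝ), 0 < r → 0 < μ (ball x r) ∧ μ (ball x r) < ⊤)
    (hPI : SupportsPoincare μ) {B : Set X} (hB : MeasurableSet B)
    (hP : perimeter μ B univ = 0) (x₀ : X) : μ B = 0 ∨ μ Bᶜ = 0 := by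
  have hnull : ∀ A : Set X, (∀ n : ℕ, ∃ m ≥ n, μ (ball x₀ m ∩ A) = 0) → μ A = 0 := by
    intro A hA
    have hcov : A = ⋃ n : ℕ, ball x₀ n ∩ A := by
      rw [← iUnion_inter, iUnion_ball_nat, univ_inter]
    rw [hcov, measure_iUnion_null_iff]
    intro n
    obtain ⟨m, hnm, hm⟩ := hA n
    exact measure_mono_null (inter_subset_inter_left A
      (ball_subset_ball (Nat.cast_le.2 hnm))) hm
  by_contra! hne
  have h₁ := mt (hnull B) hne.1
  have h₂ := mt (hnull Bᶜ) hne.2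
  push Not at h₁ h₂
  obtain ⟨n₁, hn₁⟩ := h₁
  obtain ⟨n₂, hn₂⟩ := h₂
  set n := max (max n₁ n₂) 1
  have hn : (0 : ℝ) < n := Nat.cast_pos.2 (lt_of_lt_of_le one_pos (le_max_right _ _))
  rcases measure_ball_inter_eq_zero_or_of_perimeter_eq_zero hball hPI hB hP x₀ hn with h | h
  · exact hn₁ n ((le_max_left _ _).trans (le_max_left _ _)) h
  · exact hn₂ n ((le_max_right _ _).trans (le_max_left _ _)) h

/-- If two disjoint sets do not interact, neither does a subset of one with the other. -/
theorem perimeter_add_le_of_subset [ProperSpace X] (x₀ : X) {A A' B : Set X}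
    (hA : MeasurableSet A) (hA' : MeasurableSet A') (hB : MeasurableSet B) (hsub : A' ⊆ A)
    (hdisj : Disjoint A B) (hfin : perimeter μ A univ ≠ ⊤)
    (h : perimeter μ A univ + perimeter μ B univ ≤ perimeter μ (A ∪ B) univ) :
    perimeter μ A' univ + perimeter μ B univ ≤ perimeter μ (A' ∪ B) univ := by
  have hsm := perimeter_union_add_perimeter_inter_le (μ := μ) x₀ hA (hA'.union hB)
  rw [← union_assoc, union_eq_self_of_subset_right hsub, inter_union_distrib_left,
    hdisj.inter_eq, union_empty, inter_eq_self_of_subset_right hsub] at hsm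
  refine (ENNReal.add_le_add_iff_left hfin).1 (le_trans ?_ hsm)
  rw [add_left_comm, add_comm (perimeter μ A' univ)]
  gcongr

theorem perimeter_biUnion_le [ProperSpace X] (x₀ : X) (hball : ∀ n : ℕ, μ (ball x₀ n) < ⊤)
    {G : ℕ → Set X} {S : Set ℕ} (hG : ∀ n ∈ S, MeasurableSet (G n)) :
    perimeter μ (⋃ n ∈ S, G n) univ ≤ ∑' n : S, perimeter μ (G n) univ := by
  classical
  refine (perimeter_iUnion_le x₀ hball fun n => MeasurableSet.iUnion (hG n)).trans ?_
  rw [tsum_subtype S fun n => perimeter μ (G n) univ]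
  refine ENNReal.tsum_le_tsum fun n => ?_
  by_cases hn : n ∈ S <;> simp [hn, perimeter_empty]

end Perimeter

/-- **Proposition 4.5.** If `E` is indecomposable and `{G_i}_{i ∈ I} = 𝒞𝒞ᵉ(X ∖ E)`,
then for any `J ⊆ I` the set `E ∪ ⋃_{i ∈ J} G_i` is indecomposable, with
perimeter at most `P(E, X)`. -/
theorem indecomposable_union_complement_components
    [ProperSpace X] (μ : Measure X)
    (hball : ∀ (x : X) (r : ℝ), 0 < r → 0 < μ (ball x r) ∧ μ (ball x r) < ⊤)
    (hPI : IsPISpace μ)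
    (E : Set X) (hE : MeasurableSet E) (hEfin : perimeter μ E Set.univ < ⊤)
    (hindec : IsIndecomposableIn μ E Set.univ)
    (hcompfin : perimeter μ (Set.univ \ E) Set.univ < ⊤)
    (I : Set ℕ) (G : ℕ → Set X)
    (hdec : IsEssentialPartition μ (Set.univ \ E) I G) :
    ∀ J : Set ℕ, J ⊆ I →
      IsIndecomposableIn μ (E ∪ ⋃ i ∈ J, G i) Set.univ ∧
      perimeter μ (E ∪ ⋃ i ∈ J, G i) Set.univ ≤ perimeter μ E Set.univ := by
  intro J hJ
  obtain ⟨hGm, hGdisj, hGunion, -, -, -, hsum⟩ := hdec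
  rcases isEmpty_or_nonempty X with hX | ⟨⟨x₀⟩⟩
  · have hall : ∀ A : Set X, A = ∅ := fun A => Set.eq_empty_of_isEmpty A
    refine ⟨?_, by rw [hall (E ∪ ⋃ i ∈ J, G i), hall E]⟩
    rintro ⟨F, -, -, -, -, -, -, -, hF, -⟩
    simp [hall F] at hF
  have hfinball : ∀ n : ℕ, μ (ball x₀ n) < ⊤ := fun n =>
    (measure_mono (ball_subset_ball (by linarith))).trans_lt
      (hball x₀ (n + 1) (by positivity)).2
  have hJm : ∀ n ∈ J, MeasurableSet (G n) := fun n hn => hGm n (hJ hn)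
  have hIJm : ∀ n ∈ I \ J, MeasurableSet (G n) := fun n hn => hGm n hn.1
  set D : Set X := ⋃ i ∈ J, G i with hD
  set C : Set X := ⋃ i ∈ I \ J, G i with hC
  have hDm : MeasurableSet D := MeasurableSet.biUnion J.to_countable hJm
  have hCm : MeasurableSet C := MeasurableSet.biUnion (I \ J).to_countable hIJm
  have hDCunion : D ∪ C = Eᶜ := by
    rw [compl_eq_univ_sdiff, ← hGunion, hD, hC, ← biUnion_union, union_sdiff_cancel hJ]
  have hDCdisj : Disjoint D C := by
    simp only [hD, hC, disjoint_iUnion_left, disjoint_iUnion_right]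
    intro i hi j hj
    exact hGdisj _ (hJ hj) _ hi.1 fun hij => hi.2 (hij ▸ hj)
  have hEc : perimeter μ Eᶜ univ = perimeter μ E univ := perimeter_compl E
  have hsplit : perimeter μ Eᶜ univ =
      ∑' i : J, perimeter μ (G i) univ + ∑' i : ↑(I \ J), perimeter μ (G i) univ := by
    have h := Summable.tsum_union_disjoint (f := fun n => perimeter μ (G n) univ)
      (disjoint_sdiff_right : Disjoint J (I \ J)) ENNReal.summable ENNReal.summable
    rw [union_sdiff_cancel hJ] at h
    rw [compl_eq_univ_sdiff, hsum]
    exact h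
  have hDle := perimeter_biUnion_le x₀ hfinball hJm
  have hCle := perimeter_biUnion_le x₀ hfinball hIJm
  have hDC : perimeter μ D univ + perimeter μ C univ ≤ perimeter μ (D ∪ C) univ := by
    rw [hDCunion, hsplit]
    exact add_le_add hDle hCle
  have hYC : (E ∪ D)ᶜ = C := by
    rw [compl_union, ← hDCunion, union_inter_distrib_right, inter_compl_self, empty_union,
      inter_eq_left]
    exact hDCdisj.symm.subset_compl_right
  have hPY : perimeter μ (E ∪ D) univ = perimeter μ C univ := by
    rw [← hYC, perimeter_compl]
  have hDCle : perimeter μ D univ + perimeter μ C univ ≤ perimeter μ E univ := by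
    rwa [hDCunion, hEc] at hDC
  have hDfin : perimeter μ D univ ≠ ⊤ := ((le_self_add.trans hDCle).trans_lt hEfin).ne
  refine ⟨?_, hPY.trans_le (le_add_self.trans hDCle)⟩
  have key : ∀ A B : Set X, MeasurableSet A → MeasurableSet B → Disjoint A B → A ∪ B = E ∪ D →
      perimeter μ A univ < ⊤ → 0 < μ A → 0 < μ B →
      perimeter μ (E ∪ D) univ = perimeter μ A univ + perimeter μ B univ →
      μ (E ∩ B) ≠ 0 := by
    intro A B hA hB hAB hABu hAfin hApos hBpos hPAB hEB
    have hBae : (B \ E : Set X) =ᵐ[μ] B := by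
      rw [← sdiff_inter_self_eq_sdiff]
      exact sdiff_null_ae_eq_self hEB
    have hBD : B \ E ⊆ D := by
      rw [sdiff_subset_iff, ← hABu]
      exact subset_union_right
    have hBC := perimeter_add_le_of_subset x₀ hDm (hB.diff hE) hCm hBD hDCdisj hDfin hDC
    have hAc : B ∪ C = Aᶜ := by
      rw [← hYC, ← hABu, compl_union, union_inter_distrib_left, union_compl_self, inter_univ,
        union_eq_right]
      exact hAB.symm.subset_compl_right
    rw [perimeter_congr_ae hBae, perimeter_congr_ae (hBae.union (ae_eq_refl C)), hAc,
      perimeter_compl, ← hPY, hPAB] at hBC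
    have hBzero : perimeter μ B univ = 0 := by
      have hle : perimeter μ A univ + perimeter μ B univ ≤ perimeter μ A univ + 0 := by
        rw [add_zero]
        exact le_add_self.trans hBC
      exact le_antisymm ((ENNReal.add_le_add_iff_left hAfin.ne).1 hle) bot_le
    rcases measure_eq_zero_or_compl_of_perimeter_eq_zero hball hPI.2.2 hB hBzero x₀ with h | h
    · exact hBpos.ne' h
    · exact hApos.ne' (measure_mono_null hAB.subset_compl_right h)
  rintro ⟨A, B, hA, hB, hAB, hABu, hAfin, hBfin, hApos, hBpos, hPAB⟩
  rw [inter_univ] at hABu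
  have hEB := key A B hA hB hAB hABu hAfin hApos hBpos hPAB
  have hEA := key B A hB hA hAB.symm (by rw [union_comm, hABu]) hBfin hBpos hApos
    (by rw [hPAB, add_comm])
  have hEAm := hE.inter hA
  have hEBm := hE.inter hB
  have hEunion : (E ∩ A) ∪ (E ∩ B) = E := by
    rw [← inter_union_distrib_left, hABu, inter_eq_left]
    exact subset_union_left
  have h₁ := perimeter_add_le_of_subset x₀ hA hEAm hB inter_subset_right hAB hAfin.ne
    (by rw [hABu, hPAB])
  have h₂ := perimeter_add_le_of_subset x₀ hB hEBm hEAm inter_subset_right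
    (hAB.symm.mono_right inter_subset_right) hBfin.ne
    (by rw [add_comm, union_comm]; exact h₁)
  rw [union_comm, hEunion, add_comm] at h₂
  have hle := perimeter_union_le (μ := μ) x₀ hEAm hEBm
  rw [hEunion] at hle
  refine hindec ⟨E ∩ A, E ∩ B, hEAm, hEBm, hAB.mono inter_subset_right inter_subset_right,
    by rw [hEunion, inter_univ], ?_, ?_, pos_iff_ne_zero.2 hEA, pos_iff_ne_zero.2 hEB,
    le_antisymm hle h₂⟩
  · exact (le_self_add.trans h₂).trans_lt hEfin
  · exact (le_add_self.trans h₂).trans_lt hEfin
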